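/- Let β > 2 and 0 < κ < 1/2. For every ε > 0 there exist a constant c_ε > 0 and N₀ such that for all even N ≥ N₀ and all admissible pairs (μ₁, μ₂) ∈ A_κ^N, the uniform probability measure ν_N^{μ₁,μ₂} on Ω_N(μ₁,μ₂) satisfies ν_N^{μ₁,μ₂}( |(1/N)∑_{i∈B₁} σᵢ σ_{i+N/2} − (1/2)μ₁μ₂| > ε ) ≤ exp(−c_ε N). -/

import Mathlib

open MeasureTheory Filter

noncomputable section

/-- The spin value ±1 associated to a Boolean. -/
def spinVal (s : Bool) : ℝ := if s then 1 else -1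

/-- A spin configuration on `N = 2n` sites, split into the two blocks
`B₁` (first component) and `B₂` (second component); the perfect matching
pairs the `i`-th spin of `B₁` with the `i`-th spin of `B₂`. -/
abbrev TwoConf (n : ℕ) := (Fin n → Bool) × (Fin n → Bool)

/-- Block magnetization `m₁(σ) = (2/N) ∑_{i ∈ B₁} σᵢ` with `N = 2n`. -/
def mag1 (n : ℕ) (σ : TwoConf n) : ℝ := (2 / (2 * n : ℝ)) * ∑ i, spinVal (σ.1 i)

/-- Block magnetization `m₂(σ) = (2/N) ∑_{i ∈ B₂} σᵢ` with `N = 2n`. -/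
def mag2 (n : ℕ) (σ : TwoConf n) : ℝ := (2 / (2 * n : ℝ)) * ∑ i, spinVal (σ.2 i)

/-- Membership in the typical set `A_κ^N ⊆ [−1,1]²`: the union over sign choices
`s₁, s₂ ∈ {+,−}` of the open squares of half-width `N^{−κ}` centered at
`(m^{s₁}(β/2), m^{s₂}(β/2))`, where `mp = m⁺(β/2)` and `m⁻(β/2) = −mp`. -/
def memTyp (mp κ : ℝ) (N : ℕ) (x : ℝ × ℝ) : Prop :=
  ∃ s₁ s₂ : Bool,
    |x.1 - (if s₁ then mp else -mp)| < (N : ℝ) ^ (-κ) ∧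
    |x.2 - (if s₂ then mp else -mp)| < (N : ℝ) ^ (-κ)

/-- The pair `(μ₁, μ₂)` is admissible for system size `N`: both `N(1+μ₁)/4` and
`N(1+μ₂)/4` are natural numbers. -/
def admissible (N : ℕ) (μ₁ μ₂ : ℝ) : Prop :=
  (∃ k : ℕ, (N : ℝ) * (1 + μ₁) / 4 = k) ∧ ∃ k : ℕ, (N : ℝ) * (1 + μ₂) / 4 = k

/-- The probability of the event `A` under the uniform measure `ν_N^{μ₁,μ₂}` on
`Ω_N(μ₁,μ₂) = {σ : m₁(σ) = μ₁, m₂(σ) = μ₂}` (with `N = 2n`). -/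
def nuProb (n : ℕ) (μ₁ μ₂ : ℝ) (A : Set (TwoConf n)) : ℝ :=
  (∑ σ : TwoConf n,
      ({σ : TwoConf n | mag1 n σ = μ₁ ∧ mag2 n σ = μ₂} ∩ A).indicator
        (fun _ => (1 : ℝ)) σ) /
    ∑ σ : TwoConf n,
      {σ : TwoConf n | mag1 n σ = μ₁ ∧ mag2 n σ = μ₂}.indicator (fun _ => (1 : ℝ)) σ

/-- The expectation of `g` under the uniform measure `ν_N^{μ₁,μ₂}` on
`Ω_N(μ₁,μ₂)` (with `N = 2n`). -/
def nuExp (n : ℕ) (μ₁ μ₂ : ℝ) (g : TwoConf n → ℝ) : ℝ :=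
  (∑ σ : TwoConf n, {σ : TwoConf n | mag1 n σ = μ₁ ∧ mag2 n σ = μ₂}.indicator g σ) /
    ∑ σ : TwoConf n,
      {σ : TwoConf n | mag1 n σ = μ₁ ∧ mag2 n σ = μ₂}.indicator (fun _ => (1 : ℝ)) σ

/-!
Fix the first block. The centred cross term is then a weighted sum of the spins of the second
block, which are uniform given their number `k` of plus spins. That uniform law is the law of `n`
independent spins, each plus with probability `k / n`, conditioned on having exactly `k` plus
spins. Since `k` is the most likely count, the conditioning event has probability at least
`1 / (n + 1)`, so conditioning costs a factor of at most `n + 1`, which is negligible against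
Hoeffding's exponential bound for independent spins.
-/

open ProbabilityTheory
open scoped Finset

section BinomialMode

open scoped Nat
open Finset.HasAntidiagonal (antidiagonal mem_antidiagonal)

lemma factorial_mul_pow_le_factorial_mul_pow (k j : ℕ) : k ! * k ^ j ≤ j ! * k ^ k := by
  rcases le_total k j with hkj | hjk
  · calc k ! * k ^ j = k ! * k ^ (j - k) * k ^ k := by
          rw [mul_assoc, ← pow_add, Nat.sub_add_cancel hkj]
      _ ≤ j ! * k ^ k := by gcongr; exact Nat.factorial_mul_pow_sub_le_factorial hkj
  · calc k ! * k ^ j = j ! * (k.descFactorial (k - j) * k ^ j) := by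
          rw [← Nat.factorial_mul_descFactorial (Nat.sub_le k j), Nat.sub_sub_self hjk, mul_assoc]
      _ ≤ j ! * (k ^ (k - j) * k ^ j) := by gcongr; exact Nat.descFactorial_le_pow k (k - j)
      _ = j ! * k ^ k := by rw [← pow_add, Nat.sub_add_cancel hjk]

lemma choose_mul_pow_mul_pow_le {k m i j : ℕ} (h : i + j = k + m) :
    (i + j).choose i * k ^ i * m ^ j ≤ (k + m).choose k * k ^ k * m ^ m := by
  have hfact (a b : ℕ) : (a + b).choose a * a ! * b ! = (a + b)! := by
    rw [Nat.choose_symm_add, Nat.add_choose_mul_factorial_mul_factorial]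
  refine Nat.le_of_mul_le_mul_left ?_ (by positivity : 0 < i ! * j ! * (k ! * m !))
  calc i ! * j ! * (k ! * m !) * ((i + j).choose i * k ^ i * m ^ j)
      = ((i + j).choose i * i ! * j !) * ((k ! * k ^ i) * (m ! * m ^ j)) := by ring
    _ ≤ ((i + j).choose i * i ! * j !) * ((i ! * k ^ k) * (j ! * m ^ m)) := by
        gcongr (_ * (?_ * ?_)) <;> exact factorial_mul_pow_le_factorial_mul_pow _ _
    _ = ((k + m).choose k * k ! * m !) * ((i ! * k ^ k) * (j ! * m ^ m)) := by
        rw [hfact i j, hfact k m, h]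
    _ = i ! * j ! * (k ! * m !) * ((k + m).choose k * k ^ k * m ^ m) := by ring

lemma add_pow_le_succ_mul_choose_mul_pow_mul_pow (k m : ℕ) :
    (k + m) ^ (k + m) ≤ (k + m + 1) * ((k + m).choose k * k ^ k * m ^ m) := by
  calc (k + m) ^ (k + m)
      = ∑ ij ∈ antidiagonal (k + m), (k + m).choose ij.1 * k ^ ij.1 * m ^ ij.2 := by
        simp only [(Commute.all k m).add_pow', nsmul_eq_mul, Nat.cast_id, mul_assoc]
    _ ≤ ∑ _ij ∈ antidiagonal (k + m), (k + m).choose k * k ^ k * m ^ m := by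
        refine Finset.sum_le_sum fun ij hij => ?_
        rw [mem_antidiagonal] at hij
        exact hij ▸ choose_mul_pow_mul_pow_le hij
    _ = (k + m + 1) * ((k + m).choose k * k ^ k * m ^ m) := by
        rw [Finset.sum_const, Finset.Nat.card_antidiagonal, smul_eq_mul]

lemma one_le_succ_mul_choose_mul_pow_mul_pow {n k : ℕ} (hk : k ≤ n) {p : ℝ} (hp : n * p = k) :
    1 ≤ (n + 1) * (n.choose k * (p ^ k * (1 - p) ^ (n - k))) := by
  obtain ⟨m, rfl⟩ := Nat.exists_eq_add_of_le hk
  have hq : (k + m : ℕ) * (1 - p) = m := by rw [mul_sub, hp]; push_cast; ring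
  have hpos : (0 : ℝ) < ((k + m) ^ (k + m) : ℕ) := mod_cast Nat.pow_self_pos
  refine le_of_mul_le_mul_left ?_ hpos
  calc (((k + m) ^ (k + m) : ℕ) : ℝ) * 1
      ≤ ((k + m + 1) * ((k + m).choose k * k ^ k * m ^ m) : ℕ) := by
        rw [mul_one]
        exact mod_cast add_pow_le_succ_mul_choose_mul_pow_mul_pow k m
    _ = ((k + m : ℕ) + 1) * ((k + m).choose k *
          (((k + m : ℕ) * p) ^ k * ((k + m : ℕ) * (1 - p)) ^ m)) := by
        rw [hp, hq]; push_cast; ring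
    _ = ((k + m) ^ (k + m) : ℕ) * (((k + m : ℕ) + 1) *
          ((k + m).choose k * (p ^ k * (1 - p) ^ (k + m - k)))) := by
        rw [Nat.add_sub_cancel_left, mul_pow, mul_pow, Nat.cast_pow, pow_add]; ring

end BinomialMode

section SpinSlice

variable {ι : Type*} [Fintype ι]

/-- The number of plus spins of a configuration on an arbitrary finite set of sites, with `true`
standing for `+1` as in `spinVal`. -/
def plusCount (τ : ι → Bool) : ℕ := #{i | τ i = true}

variable (ι) in
/-- The configurations with exactly `k` plus spins, that is, with magnetization
`2 * k / card ι - 1`. It is the one-block analogue of `Ω_N(μ₁, μ₂)`. -/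
def plusSlice [DecidableEq ι] (k : ℕ) : Finset (ι → Bool) := {τ | plusCount τ = k}

lemma mem_plusSlice [DecidableEq ι] {k : ℕ} {τ : ι → Bool} :
    τ ∈ plusSlice ι k ↔ plusCount τ = k := by
  simp [plusSlice]

lemma card_plusSlice [DecidableEq ι] (k : ℕ) :
    #(plusSlice ι k) = (Fintype.card ι).choose k := by
  rw [← Finset.card_univ, ← Finset.card_powersetCard]
  refine Finset.card_nbij' (fun τ => Finset.univ.filter (τ · = true))
    (fun s i => decide (i ∈ s)) ?_ ?_ ?_ ?_
  · intro τ hτ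
    simpa [plusCount] using mem_plusSlice.mp hτ
  · intro s hs
    exact mem_plusSlice.mpr (by simpa [plusCount] using hs)
  · intro τ _
    simp
  · intro s _
    simp

lemma card_not_eq_card_sub_plusCount (τ : ι → Bool) :
    #{i | ¬ τ i = true} = Fintype.card ι - plusCount τ := by
  rw [plusCount, ← Finset.card_univ,
    ← Finset.card_filter_add_card_filter_not (s := Finset.univ) (fun i => τ i = true),
    Nat.add_sub_cancel_left]

lemma sum_spinVal_eq (τ : ι → Bool) :
    ∑ i, spinVal (τ i) = 2 * plusCount τ - Fintype.card ι := by
  have hspin (b : Bool) : spinVal b = 2 * (if b = true then 1 else 0) - 1 := by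
    cases b <;> norm_num [spinVal]
  simp only [hspin, Finset.sum_sub_distrib, ← Finset.mul_sum, Finset.sum_boole, Finset.sum_const,
    Finset.card_univ, nsmul_eq_mul, mul_one, plusCount]

end SpinSlice

lemma spinVal_sq (b : Bool) : spinVal b ^ 2 = 1 := by cases b <;> norm_num [spinVal]

lemma spinVal_mem_Icc (b : Bool) : spinVal b ∈ Set.Icc (-1) 1 := by cases b <;> simp [spinVal]

section IndependentSpins

variable {ι : Type*} [Fintype ι]

variable (ι) in
/-- The law of independent spins on the sites `ι`, each plus with probability `p`. -/
def indepSpins (p : unitInterval) : Measure (ι → Bool) :=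
  Measure.pi fun _ => bernoulliMeasure true false p

instance (p : unitInterval) : IsProbabilityMeasure (indepSpins ι p) := by
  unfold indepSpins; infer_instance

lemma indepSpins_real_singleton (p : unitInterval) (τ : ι → Bool) :
    (indepSpins ι p).real {τ} =
      (p : ℝ) ^ plusCount τ * (1 - p) ^ (Fintype.card ι - plusCount τ) := by
  have hsite (b : Bool) :
      (bernoulliMeasure true false p).real {b} = if b = true then (p : ℝ) else 1 - p := by
    cases b <;> simp
  rw [← card_not_eq_card_sub_plusCount, plusCount, ← Finset.prod_const, ← Finset.prod_const,
    ← Finset.prod_ite, measureReal_def, indepSpins, Measure.pi_singleton, ENNReal.toReal_prod]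
  exact Finset.prod_congr rfl fun i _ => hsite (τ i)

lemma indepSpins_real_of_subset_plusSlice [DecidableEq ι] (p : unitInterval) {k : ℕ}
    {F : Finset (ι → Bool)} (hF : F ⊆ plusSlice ι k) :
    (indepSpins ι p).real F = #F * ((p : ℝ) ^ k * (1 - p) ^ (Fintype.card ι - k)) := by
  rw [← sum_measureReal_singleton, ← nsmul_eq_mul]
  refine Finset.sum_eq_card_nsmul fun τ hτ => ?_
  rw [indepSpins_real_singleton, mem_plusSlice.mp (hF hτ)]

lemma one_le_succ_mul_indepSpins_real_plusSlice [DecidableEq ι] {p : unitInterval} {k : ℕ}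
    (hp : Fintype.card ι * (p : ℝ) = k) :
    1 ≤ (Fintype.card ι + 1) * (indepSpins ι p).real (plusSlice ι k) := by
  have hk : k ≤ Fintype.card ι := by
    rw [← Nat.cast_le (α := ℝ), ← hp]
    exact mul_le_of_le_one_right (Nat.cast_nonneg _) p.2.2
  rw [indepSpins_real_of_subset_plusSlice p subset_rfl, card_plusSlice]
  exact one_le_succ_mul_choose_mul_pow_mul_pow hk hp

lemma card_filter_plusSlice_le [DecidableEq ι] {p : unitInterval} {k : ℕ}
    (hp : Fintype.card ι * (p : ℝ) = k) (P : (ι → Bool) → Prop) [DecidablePred P] :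
    (#{τ ∈ plusSlice ι k | P τ} : ℝ) ≤
      (Fintype.card ι + 1) * (indepSpins ι p).real {τ | P τ} * #(plusSlice ι k) := by
  have hsub : {τ ∈ plusSlice ι k | P τ} ⊆ plusSlice ι k := Finset.filter_subset _ _
  calc (#{τ ∈ plusSlice ι k | P τ} : ℝ)
      ≤ #{τ ∈ plusSlice ι k | P τ} *
          ((Fintype.card ι + 1) * (indepSpins ι p).real (plusSlice ι k)) :=
        le_mul_of_one_le_right (Nat.cast_nonneg _) (one_le_succ_mul_indepSpins_real_plusSlice hp)
    _ = (Fintype.card ι + 1) * (indepSpins ι p).real ({τ ∈ plusSlice ι k | P τ} : Finset _) *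
          #(plusSlice ι k) := by
        rw [indepSpins_real_of_subset_plusSlice p subset_rfl,
          indepSpins_real_of_subset_plusSlice p hsub]
        ring
    _ ≤ (Fintype.card ι + 1) * (indepSpins ι p).real {τ | P τ} * #(plusSlice ι k) := by
        gcongr
        · exact measure_ne_top _ _
        · intro τ hτ
          exact (Finset.mem_filter.mp hτ).2

lemma integral_spinVal_bernoulliMeasure (p : unitInterval) :
    ∫ b, spinVal b ∂bernoulliMeasure true false p = 2 * p - 1 := by
  calc ∫ b, spinVal b ∂bernoulliMeasure true false p = p * 1 + (1 - p) * -1 := by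
        simp [integral_fintype .of_finite, spinVal]
    _ = 2 * p - 1 := by ring

lemma hasSubgaussianMGF_spinVal_sub (p : unitInterval) :
    HasSubgaussianMGF (fun b => spinVal b - (2 * p - 1)) 1 (bernoulliMeasure true false p) := by
  have hspin := hasSubgaussianMGF_of_mem_Icc (μ := bernoulliMeasure true false p)
    (measurable_of_countable spinVal).aemeasurable (ae_of_all _ spinVal_mem_Icc)
  have hwidth : (‖(1 : ℝ) - -1‖₊ / 2) ^ 2 = 1 := by
    ext; norm_num
  rwa [integral_spinVal_bernoulliMeasure, hwidth] at hspin

lemma indepSpins_real_le_sum_le (p : unitInterval) (a : ι → ℝ) {t : ℝ} (ht : 0 ≤ t) :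
    (indepSpins ι p).real {τ | t ≤ ∑ i, a i * (spinVal (τ i) - (2 * p - 1))} ≤
      Real.exp (-t ^ 2 / (2 * ∑ i, a i ^ 2)) := by
  have hindep : iIndepFun (fun i τ => a i * (spinVal (τ i) - (2 * p - 1))) (indepSpins ι p) :=
    iIndepFun_pi (X := fun i b => a i * (spinVal b - (2 * p - 1)))
      fun _ => (measurable_of_countable _).aemeasurable
  have hspin (i : ι) : HasSubgaussianMGF (fun τ : ι → Bool => spinVal (τ i) - (2 * p - 1))
      1 (indepSpins ι p) := by
    refine .of_map (measurable_pi_apply i).aemeasurable (X := fun b => spinVal b - (2 * p - 1)) ?_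
    rw [indepSpins, (measurePreserving_eval _ i).map_eq]
    exact hasSubgaussianMGF_spinVal_sub p
  have hsub (i : ι) : HasSubgaussianMGF (fun τ : ι → Bool => a i * (spinVal (τ i) - (2 * p - 1)))
      (‖a i‖₊ ^ 2) (indepSpins ι p) := by
    convert (hspin i).const_mul (a i) using 1
    ext
    exact (sq_abs (a i)).trans (mul_one _).symm
  simpa using HasSubgaussianMGF.measure_sum_ge_le_of_iIndepFun hindep (s := Finset.univ)
    (fun i _ => hsub i) ht

lemma indepSpins_real_le_abs_sum_le (p : unitInterval) (a : ι → ℝ) {t : ℝ} (ht : 0 ≤ t) :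
    (indepSpins ι p).real {τ | t ≤ |∑ i, a i * (spinVal (τ i) - (2 * p - 1))|} ≤
      2 * Real.exp (-t ^ 2 / (2 * ∑ i, a i ^ 2)) := by
  have hupper := indepSpins_real_le_sum_le p a ht
  have hlower := indepSpins_real_le_sum_le p (-a) ht
  simp only [Pi.neg_apply, neg_mul, Finset.sum_neg_distrib, neg_sq] at hlower
  simp only [le_abs, Set.ofPred_or]
  linarith [measureReal_union_le (μ := indepSpins ι p)
    {τ | t ≤ ∑ i, a i * (spinVal (τ i) - (2 * p - 1))}
    {τ | t ≤ -∑ i, a i * (spinVal (τ i) - (2 * p - 1))}]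

end IndependentSpins

lemma card_filter_plusSlice_le_abs_sum_le {ι : Type*} [Fintype ι] [DecidableEq ι] [Nonempty ι]
    {k : ℕ} {m : ℝ} (hk : Fintype.card ι * (1 + m) / 2 = k) (a : ι → ℝ) {t : ℝ} (ht : 0 ≤ t) :
    (#{τ ∈ plusSlice ι k | t ≤ |∑ i, a i * (spinVal (τ i) - m)|} : ℝ) ≤
      2 * (Fintype.card ι + 1) * Real.exp (-t ^ 2 / (2 * ∑ i, a i ^ 2)) *
        #(plusSlice ι k) := by
  rcases lt_or_ge (Fintype.card ι) k with hlt | hle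
  · have hempty : plusSlice ι k = ∅ := by
      rw [← Finset.card_eq_zero, card_plusSlice, Nat.choose_eq_zero_of_lt hlt]
    simp [hempty]
  have hn : (0 : ℝ) < Fintype.card ι := mod_cast Fintype.card_pos
  obtain ⟨p, rfl⟩ : ∃ p : unitInterval, 2 * (p : ℝ) - 1 = m := by
    refine ⟨⟨k / Fintype.card ι, by positivity, ?_⟩, ?_⟩
    · exact (div_le_one hn).mpr (mod_cast hle)
    · field_simp; linarith
  have hp : Fintype.card ι * (p : ℝ) = k := by linarith
  calc (#{τ ∈ plusSlice ι k | t ≤ |∑ i, a i * (spinVal (τ i) - (2 * p - 1))|} : ℝ)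
      ≤ (Fintype.card ι + 1) *
          (indepSpins ι p).real {τ | t ≤ |∑ i, a i * (spinVal (τ i) - (2 * p - 1))|} *
          #(plusSlice ι k) := card_filter_plusSlice_le hp _
    _ ≤ (Fintype.card ι + 1) * (2 * Real.exp (-t ^ 2 / (2 * ∑ i, a i ^ 2))) *
          #(plusSlice ι k) := by
        gcongr
        exact indepSpins_real_le_abs_sum_le p a ht
    _ = _ := by ring

lemma card_filter_product_le {α β : Type*} {s : Finset α} {t : Finset β} {P : α × β → Prop}
    [DecidablePred P] {δ : ℝ} (h : ∀ x ∈ s, (#{y ∈ t | P (x, y)} : ℝ) ≤ δ * #t) :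
    (#{z ∈ s ×ˢ t | P z} : ℝ) ≤ δ * #(s ×ˢ t) := by
  calc (#{z ∈ s ×ˢ t | P z} : ℝ) = ∑ x ∈ s, (#{y ∈ t | P (x, y)} : ℝ) := by
        simp only [Finset.card_filter, Finset.sum_product, Nat.cast_sum]
    _ ≤ ∑ _x ∈ s, δ * #t := Finset.sum_le_sum h
    _ = δ * #(s ×ˢ t) := by
        rw [Finset.sum_const, nsmul_eq_mul, Finset.card_product, Nat.cast_mul]; ring

lemma eventually_add_two_le_exp_mul {c : ℝ} (hc : 0 < c) :
    ∀ᶠ x : ℝ in atTop, x + 2 ≤ Real.exp (c * x) := by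
  filter_upwards [(isLittleO_pow_exp_pos_mul_atTop 1 hc).bound (by norm_num : (0 : ℝ) < 1 / 2),
    eventually_ge_atTop 2] with x hbound hx
  rw [pow_one, Real.norm_of_nonneg (by linarith), Real.norm_of_nonneg (Real.exp_pos _).le] at hbound
  linarith

section TwoBlocks

variable {n : ℕ}

/-- The normalized cross term `N⁻¹ ∑_{i ∈ B₁} σᵢ σ_{i+N/2}` with `N = 2n`. -/
def crossTerm (σ : TwoConf n) : ℝ :=
  (∑ i, spinVal (σ.1 i) * spinVal (σ.2 i)) / ((2 * n : ℕ) : ℝ)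

lemma mag1_eq_iff {σ : TwoConf n} {μ : ℝ} (hn : n ≠ 0) :
    mag1 n σ = μ ↔ ∑ i, spinVal (σ.1 i) = n * μ := by
  unfold mag1; field_simp

lemma mag2_eq_iff {σ : TwoConf n} {μ : ℝ} (hn : n ≠ 0) :
    mag2 n σ = μ ↔ ∑ i, spinVal (σ.2 i) = n * μ := by
  unfold mag2; field_simp

lemma sum_spinVal_eq_mul_iff_mem_plusSlice {k : ℕ} {μ : ℝ} (hk : n * (1 + μ) / 2 = k)
    {τ : Fin n → Bool} : ∑ i, spinVal (τ i) = n * μ ↔ τ ∈ plusSlice (Fin n) k := by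
  rw [mem_plusSlice, sum_spinVal_eq, Fintype.card_fin, ← Nat.cast_inj (R := ℝ), ← hk]
  constructor <;> intro h <;> linarith

open Classical in
lemma nuProb_eq_card_div_card (hn : n ≠ 0) {k l : ℕ} {μ₁ μ₂ : ℝ} (hk : n * (1 + μ₁) / 2 = k)
    (hl : n * (1 + μ₂) / 2 = l) (A : Set (TwoConf n)) :
    nuProb n μ₁ μ₂ A =
      #{σ ∈ plusSlice (Fin n) k ×ˢ plusSlice (Fin n) l | σ ∈ A} /
        #(plusSlice (Fin n) k ×ˢ plusSlice (Fin n) l) := by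
  have hΩ : {σ : TwoConf n | mag1 n σ = μ₁ ∧ mag2 n σ = μ₂} =
      (plusSlice (Fin n) k ×ˢ plusSlice (Fin n) l : Finset (TwoConf n)) := by
    ext σ
    rw [Set.mem_ofPred_eq, mag1_eq_iff hn, mag2_eq_iff hn,
      sum_spinVal_eq_mul_iff_mem_plusSlice hk, sum_spinVal_eq_mul_iff_mem_plusSlice hl,
      Finset.mem_coe, Finset.mem_product]
  rw [nuProb, hΩ]
  simp only [Set.indicator_apply, Set.mem_inter_iff, Finset.mem_coe, Finset.sum_boole,
    ← Finset.filter_filter, Finset.filter_univ_mem]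

lemma crossTerm_sub_eq (hn : n ≠ 0) {x : Fin n → Bool} {μ₁ : ℝ}
    (hx : ∑ i, spinVal (x i) = n * μ₁) (y : Fin n → Bool) (μ₂ : ℝ) :
    crossTerm (x, y) - 1 / 2 * (μ₁ * μ₂) =
      (∑ i, spinVal (x i) * (spinVal (y i) - μ₂)) / ((2 * n : ℕ) : ℝ) := by
  simp only [crossTerm, mul_sub, Finset.sum_sub_distrib, ← Finset.sum_mul, hx]
  push_cast
  field_simp

open Classical in
lemma card_filter_crossTerm_le (hn : n ≠ 0) {x : Fin n → Bool} {l : ℕ} {μ₁ μ₂ ε : ℝ}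
    (hx : ∑ i, spinVal (x i) = n * μ₁) (hl : n * (1 + μ₂) / 2 = l) (hε : 0 ≤ ε) :
    (#{y ∈ plusSlice (Fin n) l | ε < |crossTerm (x, y) - 1 / 2 * (μ₁ * μ₂)|} : ℝ) ≤
      2 * (n + 1) * Real.exp (-ε ^ 2 * ((2 * n : ℕ) : ℝ)) * #(plusSlice (Fin n) l) := by
  have : NeZero n := ⟨hn⟩
  have hN : (0 : ℝ) < (2 * n : ℕ) := by positivity
  calc (#{y ∈ plusSlice (Fin n) l | ε < |crossTerm (x, y) - 1 / 2 * (μ₁ * μ₂)|} : ℝ)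
      ≤ #{y ∈ plusSlice (Fin n) l |
          ε * (2 * n : ℕ) ≤ |∑ i, spinVal (x i) * (spinVal (y i) - μ₂)|} := by
        gcongr with y
        rw [crossTerm_sub_eq hn hx, abs_div, abs_of_pos hN, lt_div_iff₀ hN]
        exact le_of_lt
    _ ≤ 2 * (n + 1) * Real.exp (-(ε * (2 * n : ℕ)) ^ 2 / (2 * n)) * #(plusSlice (Fin n) l) := by
        have hl' : Fintype.card (Fin n) * (1 + μ₂) / 2 = l := by rwa [Fintype.card_fin]
        simpa [spinVal_sq] using card_filter_plusSlice_le_abs_sum_le hl'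
          (fun i => spinVal (x i)) (mul_nonneg hε hN.le)
    _ = 2 * (n + 1) * Real.exp (-ε ^ 2 * ((2 * n : ℕ) : ℝ)) * #(plusSlice (Fin n) l) := by
        congr 3
        push_cast
        field_simp

lemma nuProb_crossTerm_le (hn : n ≠ 0) {μ₁ μ₂ ε : ℝ} (hadm : admissible (2 * n) μ₁ μ₂)
    (hε : 0 ≤ ε) :
    nuProb n μ₁ μ₂ {σ | ε < |crossTerm σ - 1 / 2 * (μ₁ * μ₂)|} ≤
      (((2 * n : ℕ) : ℝ) + 2) * Real.exp (-ε ^ 2 * ((2 * n : ℕ) : ℝ)) := by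
  classical
  obtain ⟨⟨k, hk⟩, l, hl⟩ := hadm
  replace hk : n * (1 + μ₁) / 2 = k := by rw [← hk]; push_cast; ring
  replace hl : n * (1 + μ₂) / 2 = l := by rw [← hl]; push_cast; ring
  have hfactor : (((2 * n : ℕ) : ℝ) + 2) = 2 * (n + 1) := by push_cast; ring
  rw [nuProb_eq_card_div_card hn hk hl, hfactor]
  refine div_le_of_le_mul₀ (Nat.cast_nonneg _) (by positivity) ?_
  refine card_filter_product_le fun x hx => ?_
  exact card_filter_crossTerm_le hn ((sum_spinVal_eq_mul_iff_mem_plusSlice hk).mpr hx) hl hε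

end TwoBlocks

theorem cross_term_concentration_general {ε : ℝ} (hε : 0 < ε) :
    ∃ c : ℝ, 0 < c ∧ ∃ N₀ : ℕ, ∀ n : ℕ, N₀ ≤ 2 * n →
      ∀ μ₁ μ₂ : ℝ, admissible (2 * n) μ₁ μ₂ →
        nuProb n μ₁ μ₂
            {σ : TwoConf n |
              ε < |(∑ i, spinVal (σ.1 i) * spinVal (σ.2 i)) / ((2 * n : ℕ) : ℝ) -
                1 / 2 * (μ₁ * μ₂)|}
          ≤ Real.exp (-c * ((2 * n : ℕ) : ℝ)) := by
  have hc : 0 < ε ^ 2 / 2 := by positivity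
  obtain ⟨N₀, hN₀⟩ := eventually_atTop.mp <|
    tendsto_natCast_atTop_atTop.eventually (eventually_add_two_le_exp_mul hc)
  refine ⟨ε ^ 2 / 2, hc, max N₀ 1, fun n hn μ₁ μ₂ hadm => ?_⟩
  obtain ⟨hN, hpos⟩ := max_le_iff.mp hn
  refine (nuProb_crossTerm_le (by omega) hadm hε.le).trans ?_
  calc (((2 * n : ℕ) : ℝ) + 2) * Real.exp (-ε ^ 2 * ((2 * n : ℕ) : ℝ))
      ≤ Real.exp (ε ^ 2 / 2 * ((2 * n : ℕ) : ℝ)) * Real.exp (-ε ^ 2 * ((2 * n : ℕ) : ℝ)) := by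
        gcongr
        exact hN₀ _ hN
    _ = Real.exp (-(ε ^ 2 / 2) * ((2 * n : ℕ) : ℝ)) := by rw [← Real.exp_add]; ring_nf

/-- Lemma 3.2: for `β > 2` and `0 < κ < 1/2`, for every `ε > 0` there are `c_ε > 0` and
`N₀` such that for all even `N = 2n ≥ N₀` and all admissible `(μ₁, μ₂) ∈ A_κ^N`,
`ν_N^{μ₁,μ₂}(|N⁻¹ ∑_{i∈B₁} σᵢσ_{i+N/2} − μ₁μ₂/2| > ε) ≤ exp(−c_ε N)`. -/
theorem cross_term_concentration (β κ : ℝ) (hβ : 2 < β) (hκ0 : 0 < κ) (hκ : κ < 1 / 2)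
    (mp : ℝ) (hfix : mp = Real.tanh (β / 2 * mp))
    (hmax : ∀ z : ℝ, z = Real.tanh (β / 2 * z) → z ≤ mp) :
    ∀ ε : ℝ, 0 < ε →
      ∃ c : ℝ, 0 < c ∧ ∃ N₀ : ℕ, ∀ n : ℕ, N₀ ≤ 2 * n →
        ∀ μ₁ μ₂ : ℝ, memTyp mp κ (2 * n) (μ₁, μ₂) → admissible (2 * n) μ₁ μ₂ →
          nuProb n μ₁ μ₂
              {σ : TwoConf n |
                ε < |(∑ i, spinVal (σ.1 i) * spinVal (σ.2 i)) / ((2 * n : ℕ) : ℝ) -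
                  1 / 2 * (μ₁ * μ₂)|}
            ≤ Real.exp (-c * ((2 * n : ℕ) : ℝ)) :=
  fun _ hε => cross_term_concentration_general hε |>.imp fun _ ⟨hc, N₀, hN₀⟩ =>
    ⟨hc, N₀, fun n hn μ₁ μ₂ _ hadm => hN₀ n hn μ₁ μ₂ hadm⟩

end
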